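/- arXiv:1904.11538 — 2 statements merged into one kernel-verified Lean document; each statement's English description precedes it below -/
import Mathlib

section
/- For each θ ∈ ℝ^d, the operator F^θ defined by F^θ Q = c + β P H^θ Q satisfies ‖F^θ Q − F^θ Q′‖_π ≤ β ‖Q − Q′‖_π for all Q, Q′ ∈ L²(π). -/
open MeasureTheory ProbabilityTheory

/-!
Up to scaling by `β` and translation by `c`, the operator `F^θ` is a composition of nonexpansive
maps. Applying `H^θ` to `Q` and `Q'` turns their difference into `Q - Q'` cut off outside the
continuation region. The averaging operator of a Markov kernel is nonexpansive from `L^p(πP)` to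
`L^p(π)`: by Jensen's inequality `‖(Pf)(x)‖` is at most the `L^p(P(x, ·))`-norm of `f`, and the
`L^p(π)`-norm of these fibre norms is at most the `L^p(πP)`-norm of `f`. Invariance is the equality
`πP = π`.
-/

open scoped ENNReal

section MarkovAveraging

variable {α β E : Type*} {mα : MeasurableSpace α} {mβ : MeasurableSpace β}
  {κ : Kernel α β} {μ : Measure α} {p : ℝ≥0∞}

lemma ae_aestronglyMeasurable_of_comp [TopologicalSpace E] {f : β → E}
    (hf : AEStronglyMeasurable f (κ ∘ₘ μ)) :
    ∀ᵐ x ∂μ, AEStronglyMeasurable f (κ x) := by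
  filter_upwards [Measure.ae_ae_of_ae_comp hf.ae_eq_mk] with x hx
  exact ⟨hf.mk f, hf.stronglyMeasurable_mk, hx⟩

lemma eLpNorm_eLpNorm_le_eLpNorm_comp [TopologicalSpace E] [ContinuousENorm E] {f : β → E}
    (hf : AEStronglyMeasurable f (κ ∘ₘ μ)) :
    eLpNorm (fun x ↦ eLpNorm f p (κ x)) p μ ≤ eLpNorm f p (κ ∘ₘ μ) := by
  rcases eq_or_ne p 0 with rfl | hp_zero
  · simp only [eLpNorm_exponent_zero, le_refl]
  rcases eq_or_ne p ∞ with rfl | hp_top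
  · simp only [eLpNorm_exponent_top]
    refine eLpNormEssSup_le_of_ae_enorm_bound ?_
    filter_upwards [Measure.ae_ae_of_ae_comp (ae_le_eLpNormEssSup (f := f))] with x hx
    exact eLpNormEssSup_le_of_ae_enorm_bound hx
  · have hp_pos : 0 < p.toReal := ENNReal.toReal_pos hp_zero hp_top
    have hpow : AEMeasurable (fun y ↦ ‖f y‖ₑ ^ p.toReal) (κ ∘ₘ μ) := hf.enorm.pow_const _
    simp only [eLpNorm_eq_lintegral_rpow_enorm_toReal hp_zero hp_top, enorm_eq_self, one_div,
      ENNReal.rpow_inv_rpow hp_pos.ne', Measure.lintegral_bind κ.aemeasurable hpow, le_refl]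

variable [NormedAddCommGroup E] {f g : β → E}

lemma ae_memLp_of_memLp_comp (hf : MemLp f p (κ ∘ₘ μ)) : ∀ᵐ x ∂μ, MemLp f p (κ x) := by
  have hmeas : ∀ᵐ x ∂μ, AEStronglyMeasurable f (κ x) := ae_aestronglyMeasurable_of_comp hf.1
  rcases eq_or_ne p 0 with rfl | hp_zero
  · simpa only [memLp_zero_iff_aestronglyMeasurable] using hmeas
  rcases eq_or_ne p ∞ with rfl | hp_top
  · have hbound : ∀ᵐ x ∂μ, ∀ᵐ y ∂κ x, ‖f y‖ₑ ≤ eLpNormEssSup f (κ ∘ₘ μ) :=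
      Measure.ae_ae_of_ae_comp ae_le_eLpNormEssSup
    filter_upwards [hmeas, hbound] with x hx_meas hx_bound
    refine ⟨hx_meas, eLpNorm_exponent_top.trans_lt ?_⟩
    exact (eLpNormEssSup_le_of_ae_enorm_bound hx_bound).trans_lt
      (eLpNorm_exponent_top (f := f) ▸ hf.2)
  · filter_upwards [hmeas, Measure.ae_integrable_of_integrable_comp
      (hf.integrable_norm_rpow hp_zero hp_top)] with x hx_meas hx_int
    exact (integrable_norm_rpow_iff hx_meas hp_zero hp_top).1 hx_int

variable [NormedSpace ℝ E]

/-- The averaging operator `f ↦ ∫ f(y) κ(·, dy)` of a kernel `κ`, with the Bochner integral, so that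
its value is `0` at the points `x` where `f` is not `κ(x, ·)`-integrable. -/
noncomputable def kernelAverage (κ : Kernel α β) (f : β → E) (x : α) : E :=
  ∫ y, f y ∂κ x

lemma enorm_kernelAverage_le_eLpNorm [IsMarkovKernel κ] (hp : 1 ≤ p) {x : α}
    (hf : AEStronglyMeasurable f (κ x)) : ‖kernelAverage κ f x‖ₑ ≤ eLpNorm f p (κ x) :=
  calc ‖kernelAverage κ f x‖ₑ
    _ ≤ ∫⁻ y, ‖f y‖ₑ ∂κ x := enorm_integral_le_lintegral_enorm f
    _ = eLpNorm f 1 (κ x) := eLpNorm_one_eq_lintegral_enorm.symm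
    _ ≤ eLpNorm f p (κ x) := eLpNorm_le_eLpNorm_of_exponent_le hp hf

lemma eLpNorm_kernelAverage_le [IsMarkovKernel κ] (hp : 1 ≤ p)
    (hf : AEStronglyMeasurable f (κ ∘ₘ μ)) :
    eLpNorm (kernelAverage κ f) p μ ≤ eLpNorm f p (κ ∘ₘ μ) := by
  refine le_trans (eLpNorm_mono_enorm_ae ?_) (eLpNorm_eLpNorm_le_eLpNorm_comp hf)
  filter_upwards [ae_aestronglyMeasurable_of_comp hf] with x hx
  exact enorm_kernelAverage_le_eLpNorm hp hx

lemma kernelAverage_sub_ae_eq [IsFiniteKernel κ] (hp : 1 ≤ p)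
    (hf : MemLp f p (κ ∘ₘ μ)) (hg : MemLp g p (κ ∘ₘ μ)) :
    kernelAverage κ (f - g) =ᵐ[μ] kernelAverage κ f - kernelAverage κ g := by
  filter_upwards [ae_memLp_of_memLp_comp hf, ae_memLp_of_memLp_comp hg] with x hfx hgx
  exact integral_sub (hfx.integrable hp) (hgx.integrable hp)

end MarkovAveraging

section OptimalStopping

variable {X E : Type*} [MeasurableSpace X] [NormedAddCommGroup E] {p : ℝ≥0∞} {s : Set X}
  [DecidablePred (· ∈ s)]

lemma eLpNorm_piecewise_sub_piecewise_le {μ : Measure X} (f g h : X → E) :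
    eLpNorm (s.piecewise f h - s.piecewise g h) p μ ≤ eLpNorm (f - g) p μ := by
  rw [← Set.piecewise_sub, sub_self, Set.piecewise_eq_indicator]
  exact eLpNorm_indicator_le (f - g)

variable [NormedSpace ℝ E]

/-- The operator `Q ↦ c + β P H Q` of an optimal stopping problem with an arbitrary continuation
region `s`: `H Q` is `Q` on `s` and the stopping cost `cs` off `s`. The operator `F^θ` is the case
`s = {x | Q^θ(x) < cs(x)}`. -/
noncomputable def stoppingOperator (P : Kernel X X) (β : ℝ) (c cs : X → E) (s : Set X)
    [DecidablePred (· ∈ s)] (Q : X → E) : X → E :=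
  c + β • kernelAverage P (s.piecewise Q cs)

theorem Ftheta_beta_contraction_general [CompleteSpace E] {P : Kernel X X} [IsMarkovKernel P]
    {π : Measure X} (hinv : P.Invariant π) (hp : 1 ≤ p) (hs : MeasurableSet s) (β : ℝ)
    (c : X → E) {cs Q Q' : X → E} (hcs : MemLp cs p π) (hQ : MemLp Q p π) (hQ' : MemLp Q' p π) :
    eLpNorm (stoppingOperator P β c cs s Q - stoppingOperator P β c cs s Q') p π ≤
      ‖β‖ₑ * eLpNorm (Q - Q') p π := by
  let H (R : X → E) : X → E := s.piecewise R cs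
  have memLp_H {R : X → E} (hR : MemLp R p π) : MemLp (H R) p (P ∘ₘ π) := by
    rw [hinv.def]
    exact (hR.restrict s).piecewise hs (hcs.restrict sᶜ)
  have hdiff : stoppingOperator P β c cs s Q - stoppingOperator P β c cs s Q' =ᵐ[π]
      β • kernelAverage P (H Q - H Q') := by
    filter_upwards [kernelAverage_sub_ae_eq hp (memLp_H hQ) (memLp_H hQ')] with x hx
    simp only [stoppingOperator, Pi.sub_apply, Pi.add_apply, Pi.smul_apply, add_sub_add_left_eq_sub,
      hx, smul_sub, H]
  calc eLpNorm (stoppingOperator P β c cs s Q - stoppingOperator P β c cs s Q') p π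
    _ = eLpNorm (β • kernelAverage P (H Q - H Q')) p π := eLpNorm_congr_ae hdiff
    _ ≤ ‖β‖ₑ * eLpNorm (kernelAverage P (H Q - H Q')) p π := eLpNorm_const_smul_le
    _ ≤ ‖β‖ₑ * eLpNorm (H Q - H Q') p (P ∘ₘ π) := by
      gcongr
      exact eLpNorm_kernelAverage_le hp ((memLp_H hQ).sub (memLp_H hQ')).1
    _ = ‖β‖ₑ * eLpNorm (H Q - H Q') p π := by rw [hinv.def]
    _ ≤ ‖β‖ₑ * eLpNorm (Q - Q') p π := by
      gcongr
      exact eLpNorm_piecewise_sub_piecewise_le Q Q' cs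

end OptimalStopping

/-- For each `θ ∈ ℝ^d`, the operator `F^θ Q = c + β P H^θ Q`, where
`H^θ Q (x) = Q(x)` if `Q^θ(x) < c_s(x)` and `H^θ Q (x) = c_s(x)` otherwise
(with `Q^θ(x) = θᵀ ψ(x)`), satisfies `‖F^θ Q − F^θ Q′‖_π ≤ β ‖Q − Q′‖_π`
for all `Q, Q′ ∈ L²(π)`. -/
theorem Ftheta_beta_contraction
    {X : Type*} [MeasurableSpace X] {d : ℕ}
    (P : Kernel X X) [IsMarkovKernel P]
    (π : Measure X) [IsProbabilityMeasure π]
    (hinv : π.bind (fun x => P x) = π)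
    (β : ℝ) (hβ : β ∈ Set.Ioo (0 : ℝ) 1)
    (c cs : X → ℝ) (hcm : Measurable c) (hcsm : Measurable cs)
    (hc2 : MemLp c 2 π) (hcs2 : MemLp cs 2 π)
    (ψ : X → Fin d → ℝ) (hψm : Measurable ψ)
    (hψ2 : ∀ i, MemLp (fun x => ψ x i) 2 π)
    (H : (Fin d → ℝ) → (X → ℝ) → (X → ℝ))
    (hH : ∀ θ Q x, H θ Q x = if (∑ i, θ i * ψ x i) < cs x then Q x else cs x)
    (Fθ : (Fin d → ℝ) → (X → ℝ) → (X → ℝ))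
    (hFθ : ∀ θ Q x, Fθ θ Q x = c x + β * ∫ y, H θ Q y ∂(P x))
    (θ : Fin d → ℝ)
    (Q Q' : X → ℝ) (hQm : Measurable Q) (hQ'm : Measurable Q')
    (hQ2 : MemLp Q 2 π) (hQ'2 : MemLp Q' 2 π) :
    eLpNorm (fun x => Fθ θ Q x - Fθ θ Q' x) 2 π ≤
      ENNReal.ofReal β * eLpNorm (fun x => Q x - Q' x) 2 π := by
  let s : Set X := {x | ∑ i, θ i * ψ x i < cs x}
  have hs : MeasurableSet s := measurableSet_lt (by fun_prop) hcsm
  have hF (R : X → ℝ) : Fθ θ R = stoppingOperator P β c cs s R := by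
    ext x
    simp only [hFθ, hH]
    rfl
  rw [← Real.enorm_of_nonneg hβ.1.le, hF, hF]
  exact Ftheta_beta_contraction_general hinv one_le_two hs β c hcs2 hQ2 hQ'2
end

section
/- Suppose the covariance matrix Σ_ψ is positive definite with smallest eigenvalue λ_min > 0. Then for every θ ∈ ℝ^d the matrix A(θ) is invertible, ‖A(θ) v‖ ≥ (1 − β) λ_min ‖v‖ for all v ∈ ℝ^d, and consequently the family of inverses is uniformly bounded: ‖A(θ)⁻¹‖_op ≤ ((1 − β) λ_min)⁻¹ for all θ ∈ ℝ^d. -/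
open MeasureTheory ProbabilityTheory Matrix

/-- The Euclidean norm on `ℝ^d` (vectors as functions `Fin d → ℝ`). -/
noncomputable def euclNorm {d : ℕ} (v : Fin d → ℝ) : ℝ :=
  Real.sqrt (∑ i, v i ^ 2)

/-!
For `v ∈ ℝ^d` put `u(x) = vᵀψ(x)`. Along a stationary transition `x ∼ π`, `y ∼ P(x, ·)`,
`-vᵀA(θ)v = 𝔼[u(x)²] - β 𝔼[u(x) 𝟙{θᵀψ(y) < c_s(y)} u(y)]`. By AM-GM the last expectation is at most
`(𝔼[u(x)²] + 𝔼[u(y)²]) / 2`, and invariance of `π` gives `𝔼[u(y)²] = 𝔼[u(x)²] = vᵀΣ_ψ v`. Hence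
`-vᵀA(θ)v ≥ (1 - β) vᵀΣ_ψ v ≥ (1 - β) λ_min ‖v‖²`: the matrix `-A(θ)` is coercive, with a constant
that does not depend on `θ`.
-/

open scoped RealInnerProductSpace

section Coercive

variable {𝕜 : Type*} [RCLike 𝕜]

lemma mul_norm_le_norm_of_le_norm_inner {E : Type*} [SeminormedAddCommGroup E]
    [InnerProductSpace 𝕜 E] {x y : E} {c : ℝ} (h : c * ‖x‖ ^ 2 ≤ ‖inner 𝕜 y x‖) :
    c * ‖x‖ ≤ ‖y‖ := by
  obtain hx | hx := (norm_nonneg x).eq_or_lt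
  · rw [← hx, mul_zero]
    exact norm_nonneg y
  · refine le_of_mul_le_mul_right ?_ hx
    rw [mul_assoc, ← sq]
    exact h.trans (norm_inner_le_norm y x)

variable {n : Type*} [Fintype n] [DecidableEq n]

lemma isUnit_of_forall_le_inner_toEuclideanCLM {M : Matrix n n 𝕜} {c : ℝ} (hc : 0 < c)
    (hM : ∀ x, c * ‖x‖ ^ 2 ≤ ‖inner 𝕜 (toEuclideanCLM (𝕜 := 𝕜) M x) x‖) : IsUnit M := by
  lift c to NNReal using hc.le
  rw [← isUnit_map_iff (toEuclideanCLM (n := n) (𝕜 := 𝕜))]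
  exact ContinuousLinearMap.isUnit_of_forall_le_norm_inner_map _ hc fun x =>
    (mul_comm _ _).trans_le (hM x)

lemma norm_toEuclideanCLM_inv_le {M : Matrix n n 𝕜} {c : ℝ} (hc : 0 < c) (hunit : IsUnit M)
    (hM : ∀ x, c * ‖x‖ ≤ ‖toEuclideanCLM (𝕜 := 𝕜) M x‖) :
    ‖toEuclideanCLM (𝕜 := 𝕜) M⁻¹‖ ≤ c⁻¹ := by
  refine ContinuousLinearMap.opNorm_le_bound _ (inv_nonneg.2 hc.le) fun x => ?_
  have hinv : toEuclideanCLM (𝕜 := 𝕜) M (toEuclideanCLM (𝕜 := 𝕜) M⁻¹ x) = x := by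
    rw [← mul_apply_eq_comp, ← map_mul,
      mul_nonsing_inv _ ((isUnit_iff_isUnit_det M).1 hunit), map_one, one_apply_eq_self]
  rw [inv_mul_eq_div, le_div_iff₀' hc]
  simpa only [hinv] using hM (toEuclideanCLM (𝕜 := 𝕜) M⁻¹ x)

open scoped MatrixOrder in
lemma mul_sq_norm_le_re_inner_toEuclideanCLM {S : Matrix n n 𝕜} (hS : S.IsHermitian) {c : ℝ}
    (hc : c ∈ lowerBounds (spectrum ℝ S)) (x : EuclideanSpace 𝕜 n) :
    c * ‖x‖ ^ 2 ≤ RCLike.re (inner 𝕜 (toEuclideanCLM (𝕜 := 𝕜) S x) x) := by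
  have hle : algebraMap ℝ (Matrix n n 𝕜) c ≤ S :=
    algebraMap_le_of_le_spectrum (fun _ hr => hc hr) hS.isSelfAdjoint
  have hpos := (isPositive_toEuclideanLin_iff.2 (le_iff.1 hle)).re_inner_nonneg_left x
  have hsub : toEuclideanLin (S - algebraMap ℝ (Matrix n n 𝕜) c) x =
      toEuclideanCLM (𝕜 := 𝕜) S x - (c : 𝕜) • x := by
    rw [← coe_toEuclideanCLM_eq_toEuclideanLin, ContinuousLinearMap.coe_coe, map_sub,
      _root_.sub_apply, Algebra.algebraMap_eq_smul_one, RCLike.real_smul_eq_coe_smul (K := 𝕜),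
      map_smul, map_one, _root_.smul_apply, one_apply_eq_self]
  have hself : RCLike.re (inner 𝕜 ((c : 𝕜) • x) x) = c * ‖x‖ ^ 2 := by
    rw [inner_smul_left, RCLike.conj_ofReal, RCLike.re_ofReal_mul, inner_self_eq_norm_sq]
  rwa [hsub, inner_sub_left, map_sub, hself, sub_nonneg] at hpos

end Coercive

section CrossMoment

variable {Z ι κ : Type*} [MeasurableSpace Z]

/-- The matrix `∫ F(z) G(z)ᵀ μ(dz)` of second moments of two vector-valued functions; the
covariance matrix `Σ_ψ` is `crossMomentMatrix π ψ ψ`. -/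
noncomputable def crossMomentMatrix (μ : Measure Z) (F : Z → ι → ℝ) (G : Z → κ → ℝ) :
    Matrix ι κ ℝ :=
  of fun i j => ∫ z, F z i * G z j ∂μ

lemma isHermitian_crossMomentMatrix_self (μ : Measure Z) (F : Z → ι → ℝ) :
    (crossMomentMatrix μ F F).IsHermitian := by
  ext i j
  simp only [crossMomentMatrix, conjTranspose_apply, of_apply, star_trivial, mul_comm]

lemma dotProduct_crossMomentMatrix_mulVec [Fintype ι] [Fintype κ] {μ : Measure Z}
    {F : Z → ι → ℝ} {G : Z → κ → ℝ} (hF : ∀ i, MemLp (fun z => F z i) 2 μ)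
    (hG : ∀ j, MemLp (fun z => G z j) 2 μ) (u : ι → ℝ) (v : κ → ℝ) :
    u ⬝ᵥ crossMomentMatrix μ F G *ᵥ v = ∫ z, (u ⬝ᵥ F z) * (v ⬝ᵥ G z) ∂μ := by
  have hint (i : ι) (j : κ) : Integrable (fun z => u i * F z i * (v j * G z j)) μ :=
    ((hF i).const_mul (u i)).integrable_mul ((hG j).const_mul (v j))
  simp only [dotProduct, Finset.sum_mul_sum]
  rw [integral_finsetSum _ fun i _ => integrable_finsetSum _ fun j _ => hint i j]
  refine Finset.sum_congr rfl fun i _ => ?_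
  rw [integral_finsetSum _ fun j _ => hint i j, mulVec, dotProduct, Finset.mul_sum]
  refine Finset.sum_congr rfl fun j _ => ?_
  rw [crossMomentMatrix, of_apply, ← integral_mul_const, ← integral_const_mul]
  exact integral_congr_ae (.of_forall fun z => by ring)

lemma memLp_dotProduct [Fintype ι] {μ : Measure Z} {p : ENNReal} {F : Z → ι → ℝ}
    (hF : ∀ i, MemLp (fun z => F z i) p μ) (v : ι → ℝ) : MemLp (fun z => v ⬝ᵥ F z) p μ :=
  memLp_finsetSum _ fun i _ => (hF i).const_mul (v i)

end CrossMoment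

lemma mul_mul_sub_le_of_abs_le {w β : ℝ} (hw : |w| ≤ β) (a b : ℝ) :
    a * (w * b - a) ≤ (β / 2 - 1) * a ^ 2 + β / 2 * b ^ 2 := by
  have hβ : 0 ≤ β := (abs_nonneg w).trans hw
  have amgm : |a * b| ≤ (a ^ 2 + b ^ 2) / 2 := by
    rw [abs_mul, ← sq_abs a, ← sq_abs b]
    linarith [two_mul_le_add_sq |a| |b|]
  calc a * (w * b - a) = w * (a * b) - a ^ 2 := by ring
    _ ≤ |w| * |a * b| - a ^ 2 :=
      sub_le_sub_right ((le_abs_self _).trans (abs_mul _ _).le) _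
    _ ≤ β * ((a ^ 2 + b ^ 2) / 2) - a ^ 2 := by gcongr
    _ = (β / 2 - 1) * a ^ 2 + β / 2 * b ^ 2 := by ring

lemma mul_integral_sq_le_neg_integral_mul_sub {Z : Type*} [MeasurableSpace Z] {μ : Measure Z}
    {f g w : Z → ℝ} {β : ℝ} (hf : MemLp f 2 μ) (hg : MemLp g 2 μ)
    (hwm : AEStronglyMeasurable w μ) (hw : ∀ᵐ z ∂μ, |w z| ≤ β)
    (hfg : ∫ z, g z ^ 2 ∂μ = ∫ z, f z ^ 2 ∂μ) :
    (1 - β) * ∫ z, f z ^ 2 ∂μ ≤ -∫ z, f z * (w z * g z - f z) ∂μ := by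
  have hwg : MemLp (fun z => w z * g z) 2 μ := hg.mul' (memLp_top_of_bound hwm β hw)
  have hle : ∫ z, f z * (w z * g z - f z) ∂μ
      ≤ (β / 2 - 1) * ∫ z, f z ^ 2 ∂μ + β / 2 * ∫ z, g z ^ 2 ∂μ := by
    rw [← integral_const_mul, ← integral_const_mul,
      ← integral_add (hf.integrable_sq.const_mul _) (hg.integrable_sq.const_mul _)]
    exact integral_mono_ae (hf.integrable_mul (hwg.sub hf))
      ((hf.integrable_sq.const_mul _).add (hg.integrable_sq.const_mul _))
      (hw.mono fun z hz => mul_mul_sub_le_of_abs_le hz (f z) (g z))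
  rw [hfg] at hle
  linarith

lemma integral_comp_of_measurePreserving {Y Z E : Type*} [MeasurableSpace Y] [MeasurableSpace Z]
    [NormedAddCommGroup E] [NormedSpace ℝ E] {μ : Measure Y} {ν : Measure Z} {g : Y → Z}
    (hg : MeasurePreserving g μ ν) {f : Z → E} (hf : AEStronglyMeasurable f ν) :
    ∫ y, f (g y) ∂μ = ∫ z, f z ∂ν := by
  rw [← hg.map_eq, integral_map hg.aemeasurable (hg.map_eq ▸ hf)]

section TransitionMatrix

variable {X ι : Type*} [MeasurableSpace X] {P : Kernel X X} {π : Measure X} {w : X → ℝ}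
  {ψ : X → ι → ℝ} {β : ℝ}

/-- The matrix `∫∫ ψ(x) (w(y) ψ(y) - ψ(x))ᵀ P(x, dy) π(dx)` of linear temporal-difference learning
with features `ψ` and a state-dependent discount factor `w`; `A(θ)` is the case
`w(y) = β 𝟙{θᵀψ(y) < c_s(y)}`. -/
noncomputable def tdMatrix (P : Kernel X X) (π : Measure X) (w : X → ℝ) (ψ : X → ι → ℝ) :
    Matrix ι ι ℝ :=
  of fun i j => ∫ x, ∫ y, ψ x i * (w y * ψ y j - ψ x j) ∂P x ∂π

lemma measurePreserving_fst_compProd {Y : Type*} [MeasurableSpace Y] (μ : Measure X) [SFinite μ]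
    (κ : Kernel X Y) [IsMarkovKernel κ] : MeasurePreserving Prod.fst (μ ⊗ₘ κ) μ :=
  ⟨measurable_fst, Measure.fst_compProd μ κ⟩

variable [SFinite π]

lemma measurePreserving_snd_compProd [IsSFiniteKernel P] (hinv : P.Invariant π) :
    MeasurePreserving Prod.snd (π ⊗ₘ P) π :=
  ⟨measurable_snd, (Measure.snd_compProd π P).trans hinv⟩

variable [IsMarkovKernel P] (hinv : P.Invariant π) (hψ : ∀ i, MemLp (fun x => ψ x i) 2 π)
  (hwm : AEStronglyMeasurable w π) (hw : ∀ᵐ y ∂π, |w y| ≤ β)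

include hinv hψ hwm hw

lemma memLp_compProd_discounted_sub (i : ι) :
    MemLp (fun z : X × X => w z.2 * ψ z.2 i - ψ z.1 i) 2 (π ⊗ₘ P) :=
  (((hψ i).mul' (memLp_top_of_bound hwm β hw)).comp_measurePreserving
    (measurePreserving_snd_compProd hinv)).sub
    ((hψ i).comp_measurePreserving (measurePreserving_fst_compProd π P))

lemma tdMatrix_eq_crossMomentMatrix :
    tdMatrix P π w ψ = crossMomentMatrix (π ⊗ₘ P) (fun z => ψ z.1)
      (fun z i => w z.2 * ψ z.2 i - ψ z.1 i) := by
  ext i j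
  have hψ₁ : MemLp (fun z : X × X => ψ z.1 i) 2 (π ⊗ₘ P) :=
    (hψ i).comp_measurePreserving (measurePreserving_fst_compProd π P)
  exact (Measure.integral_compProd
    (hψ₁.integrable_mul (memLp_compProd_discounted_sub hinv hψ hwm hw j))).symm

variable [Fintype ι]

lemma dotProduct_tdMatrix_mulVec (v : ι → ℝ) :
    v ⬝ᵥ tdMatrix P π w ψ *ᵥ v =
      ∫ z, (v ⬝ᵥ ψ z.1) * (w z.2 * (v ⬝ᵥ ψ z.2) - v ⬝ᵥ ψ z.1) ∂(π ⊗ₘ P) := by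
  have hψ₁ (i : ι) : MemLp (fun z : X × X => ψ z.1 i) 2 (π ⊗ₘ P) :=
    (hψ i).comp_measurePreserving (measurePreserving_fst_compProd π P)
  rw [tdMatrix_eq_crossMomentMatrix hinv hψ hwm hw, dotProduct_crossMomentMatrix_mulVec
    hψ₁ (memLp_compProd_discounted_sub hinv hψ hwm hw)]
  refine integral_congr_ae (.of_forall fun z => congrArg (v ⬝ᵥ ψ z.1 * ·) ?_)
  exact (dotProduct_sub v (w z.2 • ψ z.2) (ψ z.1)).trans
    (congrArg (· - v ⬝ᵥ ψ z.1) (dotProduct_smul (w z.2) v (ψ z.2)))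

lemma mul_dotProduct_crossMomentMatrix_le_neg_dotProduct_tdMatrix (v : ι → ℝ) :
    (1 - β) * (v ⬝ᵥ crossMomentMatrix π ψ ψ *ᵥ v) ≤ -(v ⬝ᵥ tdMatrix P π w ψ *ᵥ v) := by
  have hfst := measurePreserving_fst_compProd π P
  have hsnd := measurePreserving_snd_compProd hinv
  have hu : MemLp (fun x => v ⬝ᵥ ψ x) 2 π := memLp_dotProduct hψ v
  have hsq_fst : ∫ z, (v ⬝ᵥ ψ z.1) ^ 2 ∂(π ⊗ₘ P) = ∫ x, (v ⬝ᵥ ψ x) ^ 2 ∂π :=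
    integral_comp_of_measurePreserving hfst (hu.1.pow 2)
  have hsq_snd : ∫ z, (v ⬝ᵥ ψ z.2) ^ 2 ∂(π ⊗ₘ P) = ∫ x, (v ⬝ᵥ ψ x) ^ 2 ∂π :=
    integral_comp_of_measurePreserving hsnd (hu.1.pow 2)
  rw [dotProduct_tdMatrix_mulVec hinv hψ hwm hw, dotProduct_crossMomentMatrix_mulVec hψ hψ]
  simp only [← sq]
  rw [← hsq_fst]
  exact mul_integral_sq_le_neg_integral_mul_sub (hu.comp_measurePreserving hfst)
    (hu.comp_measurePreserving hsnd) (hwm.comp_measurePreserving hsnd)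
    (hsnd.quasiMeasurePreserving.ae hw) (hsq_snd.trans hsq_fst.symm)

end TransitionMatrix

section ContinuationDiscount

variable {X ι : Type*} [Fintype ι] {ψ : X → ι → ℝ} {cs : X → ℝ} {β : ℝ}

/-- The discount factor `w(y) = β 𝟙{θᵀψ(y) < c_s(y)}` of the stopping rule that continues exactly
where the linear value `θᵀψ` is below the stopping cost `c_s`. -/
noncomputable def continuationDiscount (β : ℝ) (cs : X → ℝ) (ψ : X → ι → ℝ) (θ : ι → ℝ) : X → ℝ :=
  {y | θ ⬝ᵥ ψ y < cs y}.indicator fun _ => β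

lemma abs_continuationDiscount_le (hβ : 0 ≤ β) (θ : ι → ℝ) (y : X) :
    |continuationDiscount β cs ψ θ y| ≤ β :=
  (norm_indicator_le_norm_self (fun _ => β) y).trans_eq (abs_of_nonneg hβ)

variable [MeasurableSpace X]

lemma measurable_continuationDiscount (hcs : Measurable cs) (hψ : Measurable ψ) (θ : ι → ℝ) :
    Measurable (continuationDiscount β cs ψ θ) :=
  measurable_const.indicator (measurableSet_lt (by simp only [dotProduct]; fun_prop) hcs)

lemma tdMatrix_continuationDiscount_apply (P : Kernel X X) (π : Measure X) (θ : ι → ℝ) (i j : ι) :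
    tdMatrix P π (continuationDiscount β cs ψ θ) ψ i j =
      ∫ x, ∫ y, ψ x i * (β * (if θ ⬝ᵥ ψ y < cs y then ψ y j else 0) - ψ x j) ∂(P x) ∂π := by
  simp only [tdMatrix, of_apply, continuationDiscount, Set.indicator_apply, Set.mem_ofPred_eq,
    mul_ite, ite_mul, mul_zero, zero_mul]

end ContinuationDiscount

lemma euclNorm_eq_norm_toLp {d : ℕ} (v : Fin d → ℝ) : euclNorm v = ‖WithLp.toLp 2 v‖ := by
  simp [euclNorm, EuclideanSpace.norm_eq]

theorem Atheta_invertible_uniform_inverse_bound_general {X ι : Type*} [MeasurableSpace X]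
    [Fintype ι] [DecidableEq ι] (P : Kernel X X) [IsMarkovKernel P] (π : Measure X) [SFinite π]
    (hinv : P.Invariant π) (ψ : X → ι → ℝ) (hψ : ∀ i, MemLp (fun x => ψ x i) 2 π)
    (w : X → ℝ) (hwm : AEStronglyMeasurable w π) {β : ℝ} (hβ : β < 1)
    (hw : ∀ᵐ y ∂π, |w y| ≤ β) {lam : ℝ} (hlam : 0 < lam)
    (hspec : lam ∈ lowerBounds (spectrum ℝ (crossMomentMatrix π ψ ψ))) :
    IsUnit (tdMatrix P π w ψ) ∧
      (∀ v, (1 - β) * lam * ‖v‖ ≤ ‖toEuclideanCLM (𝕜 := ℝ) (tdMatrix P π w ψ) v‖) ∧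
      ‖toEuclideanCLM (𝕜 := ℝ) (tdMatrix P π w ψ)⁻¹‖ ≤ ((1 - β) * lam)⁻¹ := by
  have hc : 0 < (1 - β) * lam := mul_pos (sub_pos.2 hβ) hlam
  have hcoer (v : EuclideanSpace ℝ ι) : (1 - β) * lam * ‖v‖ ^ 2 ≤
      ‖⟪toEuclideanCLM (𝕜 := ℝ) (tdMatrix P π w ψ) v, v⟫‖ :=
    calc (1 - β) * lam * ‖v‖ ^ 2
        ≤ (1 - β) * ⟪toEuclideanCLM (𝕜 := ℝ) (crossMomentMatrix π ψ ψ) v, v⟫ := by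
          rw [mul_assoc]
          exact mul_le_mul_of_nonneg_left (mul_sq_norm_le_re_inner_toEuclideanCLM
            (isHermitian_crossMomentMatrix_self π ψ) hspec v) (sub_pos.2 hβ).le
      _ ≤ -⟪toEuclideanCLM (𝕜 := ℝ) (tdMatrix P π w ψ) v, v⟫ := by
          simpa only [real_inner_comm, inner_toEuclideanCLM] using
            mul_dotProduct_crossMomentMatrix_le_neg_dotProduct_tdMatrix hinv hψ hwm hw v.ofLp
      _ ≤ ‖⟪toEuclideanCLM (𝕜 := ℝ) (tdMatrix P π w ψ) v, v⟫‖ := neg_le_abs _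
  have hbound := fun v => mul_norm_le_norm_of_le_norm_inner (hcoer v)
  have hunit := isUnit_of_forall_le_inner_toEuclideanCLM hc hcoer
  exact ⟨hunit, hbound, norm_toEuclideanCLM_inv_le hc hunit hbound⟩

/-- Suppose `Σ_ψ` is positive definite with smallest eigenvalue
`λ_min > 0`.  Then for every `θ ∈ ℝ^d` the matrix `A(θ)` is invertible,
`‖A(θ) v‖ ≥ (1 − β) λ_min ‖v‖` for all `v`, and the family of inverses is
uniformly bounded in operator norm: `‖A(θ)⁻¹‖_op ≤ ((1 − β) λ_min)⁻¹`. -/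
theorem Atheta_invertible_uniform_inverse_bound
    {X : Type*} [MeasurableSpace X] {d : ℕ}
    (P : Kernel X X) [IsMarkovKernel P]
    (π : Measure X) [IsProbabilityMeasure π]
    (hinv : π.bind (fun x => P x) = π)
    (β : ℝ) (hβ : β ∈ Set.Ioo (0 : ℝ) 1)
    (cs : X → ℝ) (hcsm : Measurable cs)
    (ψ : X → Fin d → ℝ) (hψm : Measurable ψ)
    (hψ2 : ∀ i, MemLp (fun x => ψ x i) 2 π)
    (A : (Fin d → ℝ) → Matrix (Fin d) (Fin d) ℝ)
    (hA : ∀ θ i j, A θ i j =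
      ∫ x, ∫ y, ψ x i * (β * (if θ ⬝ᵥ ψ y < cs y then ψ y j else 0) - ψ x j)
        ∂(P x) ∂π)
    (Sψ : Matrix (Fin d) (Fin d) ℝ)
    (hSψ : ∀ i j, Sψ i j = ∫ x, ψ x i * ψ x j ∂π)
    (hpd : Sψ.PosDef)
    (lammin : ℝ) (hlammin : IsLeast (spectrum ℝ Sψ) lammin)
    (hlampos : 0 < lammin) :
    ∀ θ : Fin d → ℝ,
      IsUnit (A θ) ∧
      (∀ v : Fin d → ℝ, (1 - β) * lammin * euclNorm v ≤ euclNorm (A θ *ᵥ v)) ∧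
      ‖(Matrix.toEuclideanCLM (𝕜 := ℝ) (n := Fin d)) (A θ)⁻¹‖ ≤
        ((1 - β) * lammin)⁻¹ := by
  intro θ
  obtain rfl : Sψ = crossMomentMatrix π ψ ψ := Matrix.ext hSψ
  have hA' : A θ = tdMatrix P π (continuationDiscount β cs ψ θ) ψ :=
    Matrix.ext fun i j => (hA θ i j).trans (tdMatrix_continuationDiscount_apply P π θ i j).symm
  obtain ⟨hunit, hbound, hinverse⟩ := Atheta_invertible_uniform_inverse_bound_general P π hinv ψ
    hψ2 _ (measurable_continuationDiscount hcsm hψm θ).aestronglyMeasurable hβ.2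
    (.of_forall (abs_continuationDiscount_le hβ.1.le θ)) hlampos hlammin.2
  simp only [hA', euclNorm_eq_norm_toLp]
  exact ⟨hunit, fun v => hbound (WithLp.toLp 2 v), hinverse⟩
end
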